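/- Let σ : ℝ^{n_r} → ℝ^{n_r} be Lipschitz with constant L_σ, let W_res, W_in satisfy γ := L_σ·‖W_res‖ < 1, let v : ℤ → ℝ^{n_v} be a bounded input sequence with unique bounded trajectory r* : ℤ → ℝ^{n_r}, and let r be any forward trajectory driven by the same inputs from an arbitrary state r_0 at time 0 (r_k = σ(W_res r_{k-1} + W_in v_k) for k ≥ 1). Then ‖r_k − r*_k‖ ≤ γ^k · ‖r_0 − r*_0‖ for all k ∈ ℕ; hence every forward trajectory converges exponentially to the unique bounded trajectory, regardless of its initial condition. -/

import Mathlib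

open scoped NNReal

theorem edist_le_pow_mul_of_lipschitzWith_step {X : Type*} [PseudoEMetricSpace X] {K : ℝ≥0}
    {f : ℕ → X → X} (hf : ∀ k, LipschitzWith K (f k)) {x y : ℕ → X}
    (hx : ∀ k, x (k + 1) = f k (x k)) (hy : ∀ k, y (k + 1) = f k (y k)) (k : ℕ) :
    edist (x k) (y k) ≤ (K : ENNReal) ^ k * edist (x 0) (y 0) := by
  induction k with
  | zero => simp
  | succ k ih =>
    calc edist (x (k + 1)) (y (k + 1)) = edist (f k (x k)) (f k (y k)) := by rw [hx, hy]
      _ ≤ K * edist (x k) (y k) := hf k (x k) (y k)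
      _ ≤ K * (K ^ k * edist (x 0) (y 0)) := by gcongr
      _ = K ^ (k + 1) * edist (x 0) (y 0) := by rw [pow_succ', mul_assoc]

theorem dist_le_pow_mul_of_lipschitzWith_step {X : Type*} [PseudoMetricSpace X] {K : ℝ≥0}
    {f : ℕ → X → X} (hf : ∀ k, LipschitzWith K (f k)) {x y : ℕ → X}
    (hx : ∀ k, x (k + 1) = f k (x k)) (hy : ∀ k, y (k + 1) = f k (y k)) (k : ℕ) :
    dist (x k) (y k) ≤ (K : ℝ) ^ k * dist (x 0) (y 0) := by
  have h := edist_le_pow_mul_of_lipschitzWith_step hf hx hy k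
  simp only [edist_nndist] at h
  exact_mod_cast h

section Reservoir

variable {𝕜 E F : Type*} [NontriviallyNormedField 𝕜]
  [SeminormedAddCommGroup E] [NormedSpace 𝕜 E] [SeminormedAddCommGroup F] [NormedSpace 𝕜 F]

/-- The reservoir update `x ↦ σ (W_res x + u)`. An input `v` acts on the state only through
`u = W_in v`, so the update is parametrized by `u` rather than by `W_in` and `v`. -/
def reservoirUpdate (σ : F → E) (Wres : E →L[𝕜] F) (u : F) (x : E) : E :=
  σ (Wres x + u)

theorem lipschitzWith_reservoirUpdate {σ : F → E} {Lσ : ℝ≥0} (hσ : LipschitzWith Lσ σ)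
    (Wres : E →L[𝕜] F) (u : F) :
    LipschitzWith (Lσ * ‖Wres‖₊) (reservoirUpdate σ Wres u) :=
  hσ.comp <| by simpa only [add_zero] using Wres.lipschitz.add (LipschitzWith.const u)

theorem forward_trajectory_converges_to_bounded_general {σ : F → E} {Lσ : ℝ≥0}
    (hσ : LipschitzWith Lσ σ) (Wres : E →L[𝕜] F) {u : ℕ → F} {r s : ℕ → E}
    (hr : ∀ k, r (k + 1) = reservoirUpdate σ Wres (u k) (r k))
    (hs : ∀ k, s (k + 1) = reservoirUpdate σ Wres (u k) (s k)) (k : ℕ) :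
    ‖r k - s k‖ ≤ (Lσ * ‖Wres‖) ^ k * ‖r 0 - s 0‖ := by
  simpa only [dist_eq_norm, NNReal.coe_mul, coe_nnnorm] using
    dist_le_pow_mul_of_lipschitzWith_step
      (fun k ↦ lipschitzWith_reservoirUpdate hσ Wres (u k)) hr hs k

end Reservoir

/-- **Exponential convergence to the unique bounded trajectory.**
Let `γ = Lσ·‖W_res‖ < 1`, let `r*` be the unique bounded trajectory on `ℤ` driven by
the bounded input `v`, and let `r : ℕ → ℝ^{n_r}` be any forward trajectory driven by
the same inputs from an arbitrary state `r 0` at time `0`. Then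
`‖r k - r* k‖ ≤ γ^k · ‖r 0 - r* 0‖` for all `k ∈ ℕ`. -/
theorem forward_trajectory_converges_to_bounded {nr nv : ℕ}
    (σ : EuclideanSpace ℝ (Fin nr) → EuclideanSpace ℝ (Fin nr)) (Lσ : ℝ≥0)
    (hσ : LipschitzWith Lσ σ)
    (Wres : EuclideanSpace ℝ (Fin nr) →L[ℝ] EuclideanSpace ℝ (Fin nr))
    (Win : EuclideanSpace ℝ (Fin nv) →L[ℝ] EuclideanSpace ℝ (Fin nr))
    (γ : ℝ) (hγ : γ = (Lσ : ℝ) * ‖Wres‖) (hcontr : γ < 1)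
    (v : ℤ → EuclideanSpace ℝ (Fin nv)) (hv : ∃ M : ℝ, ∀ k : ℤ, ‖v k‖ ≤ M)
    (rstar : ℤ → EuclideanSpace ℝ (Fin nr))
    (hstarbdd : ∃ M : ℝ, ∀ k : ℤ, ‖rstar k‖ ≤ M)
    (hstar : ∀ k : ℤ, rstar k = σ (Wres (rstar (k - 1)) + Win (v k)))
    (r : ℕ → EuclideanSpace ℝ (Fin nr))
    (hr : ∀ k : ℕ, r (k + 1) = σ (Wres (r k) + Win (v (k + 1)))) :
    ∀ k : ℕ, ‖r k - rstar k‖ ≤ γ ^ k * ‖r 0 - rstar 0‖ := by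
  subst hγ
  exact forward_trajectory_converges_to_bounded_general hσ Wres (s := fun k ↦ rstar k) hr
    fun k ↦ by simpa [reservoirUpdate] using hstar (k + 1)
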